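/- For every w ∈ K(B_n), one has ψ_n(w) = st(0 · w), where 0 · w denotes the word of length n+1 obtained by prepending the letter 0 to the one-line notation of w, and st denotes standardization of a word of distinct integers. -/

import Mathlib

/-! The right-hand side `st (0 · w)` satisfies the recursion that defines `ψ`, so the theorem follows
by induction on the recursion.

If `w = a ⊕ sts b` with `a` of length `p`, then every letter of `b` has absolute value greater than
`p`. As `w` is a signed permutation, the letters of `b` use up all the absolute values `p+1, …, n`, so
`a` is again a signed permutation (`IsSignedPerm.take`) and the letters of `0 · a` lie in `[-p, p]`.

* If `b` is positive, all its letters exceed those of `0 · a`, so `st (0 · w) = st (0 · a) ⊕ st b`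
  (`st_append_of_lt`), and `st b = sts b`.
* If `b` is negative, all its letters are below those of `0 · a`, so `st (0 · w) = st (0 · a) ⊖ st b`
  (`st_append_of_gt`), and `st b` is `sts b` with every entry raised by `n - p + 1`
  (`sts_map_add_of_neg`). -/

namespace SepPaperFormal

noncomputable section

open Polynomial

def st (a : List ℤ) : List ℤ :=
  a.map (fun x => ((a.filter (fun y => decide (y < x))).length : ℤ) + 1)

def sts (a : List ℤ) : List ℤ :=
  a.map (fun x => x.sign * (((a.filter (fun y => decide (|y| < |x|))).length : ℤ) + 1))

def IsSignedPerm (w : List ℤ) : Prop :=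
  (w.map Int.natAbs).Perm (List.range' 1 w.length)

def ContainsB (w u : List ℤ) : Prop := ∃ s : List ℤ, s.Sublist w ∧ sts s = u

def ContainsA (w u : List ℤ) : Prop := ∃ s : List ℤ, s.Sublist w ∧ st s = u

def IsSepB (w : List ℤ) : Prop :=
  IsSignedPerm w ∧
    ¬ ContainsB w [-2, 1] ∧ ¬ ContainsB w [2, -1] ∧
    ¬ ContainsB w [3, 1, 4, 2] ∧ ¬ ContainsB w [2, 4, 1, 3] ∧
    ¬ ContainsB w [-3, -1, -4, -2] ∧ ¬ ContainsB w [-2, -4, -1, -3]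

def IsSepA (w : List ℤ) : Prop :=
  IsSignedPerm w ∧ (∀ x ∈ w, 0 < x) ∧
    ¬ ContainsA w [3, 1, 4, 2] ∧ ¬ ContainsA w [2, 4, 1, 3]

def oplus (u v : List ℤ) : List ℤ :=
  u ++ v.map (fun x => x + x.sign * (u.length : ℤ))

def ominus (u v : List ℤ) : List ℤ :=
  u.map (fun x => x + x.sign * (v.length : ℤ)) ++ v

def AllSameSign (l : List ℤ) : Prop := (∀ x ∈ l, 0 < x) ∨ (∀ x ∈ l, x < 0)

def OppSign (a b : List ℤ) : Prop := ∀ x ∈ a, ∀ y ∈ b, x * y < 0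

-- blocks for statement 3
def blockOf (w : List ℤ) (q : List ℕ) (i : ℕ) : List ℤ :=
  (w.drop q[i]!).take (q[i+1]! - q[i]!)

def cutSeq (w : List ℤ) (cuts : List ℕ) : List ℕ := 0 :: (cuts ++ [w.length])

def GoodDecomp (w : List ℤ) (cuts : List ℕ) : Prop :=
  List.Chain' (· < ·) (cutSeq w cuts) ∧
  w = List.foldl oplus (blockOf w (cutSeq w cuts) 0)
        ((List.range cuts.length).map (fun i => sts (blockOf w (cutSeq w cuts) (i + 1)))) ∧
  IsSepB (blockOf w (cutSeq w cuts) 0) ∧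
  (∀ i, 1 ≤ i → i ≤ cuts.length → IsSepB (sts (blockOf w (cutSeq w cuts) i))) ∧
  (∀ j, j ≤ cuts.length → AllSameSign (blockOf w (cutSeq w cuts) j)) ∧
  (∀ i, 1 ≤ i → i ≤ cuts.length →
    OppSign (blockOf w (cutSeq w cuts) (i - 1)) (blockOf w (cutSeq w cuts) i))

-- statement 4
inductive InC : List ℤ → Prop
  | one : InC [1]
  | negone : InC [-1]
  | dsum (u v : List ℤ) : InC u → InC v → InC (oplus u v)
  | ssum (u v : List ℤ) : InC u → InC v → AllSameSign (u ++ v) → InC (ominus u v)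

-- the map φₙ as a relation
inductive PhiRel : List ℤ → List ℤ → Prop
  | base : PhiRel [1] []
  | gasc (w u : List ℤ) (p : ℕ) (hp1 : 1 ≤ p) (hp2 : p < w.length)
      (h : ∀ i j, i < p → p ≤ j → j < w.length → w[i]! < w[j]!)
      (ih : PhiRel (w.take p) u) :
      PhiRel w (oplus u (st (w.drop p)))
  | gdes (w u : List ℤ) (p : ℕ) (hp1 : 1 ≤ p) (hp2 : p < w.length)
      (h : ∀ i j, i < p → p ≤ j → j < w.length → w[j]! < w[i]!)
      (ih : PhiRel (st (w.take p)) u) :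
      PhiRel w (oplus u ((w.drop p).map (fun x => x - ((w.length - p : ℕ) : ℤ) - 1)))

-- the map ψₙ as a relation
inductive PsiRel : List ℤ → List ℤ → Prop
  | base : PsiRel [] [1]
  | pos (w u : List ℤ) (p : ℕ) (hp : p < w.length)
      (hdec : w = oplus (w.take p) (sts (w.drop p)))
      (hsign : AllSameSign (w.drop p))
      (hlast : 0 < w[w.length - 1]!)
      (ih : PsiRel (w.take p) u) :
      PsiRel w (oplus u (sts (w.drop p)))
  | neg (w u : List ℤ) (p : ℕ) (hp : p < w.length)
      (hdec : w = oplus (w.take p) (sts (w.drop p)))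
      (hsign : AllSameSign (w.drop p))
      (hlast : w[w.length - 1]! < 0)
      (ih : PsiRel (w.take p) u) :
      PsiRel w (ominus u ((sts (w.drop p)).map (fun x => x + ((w.length - p : ℕ) : ℤ) + 1)))

-- descent statistics
def DesB (w : List ℤ) : Finset ℕ :=
  (Finset.range w.length).filter (fun i => (if i = 0 then (0 : ℤ) else w[i-1]!) > w[i]!)

def DDesB (w : List ℤ) : Finset ℕ :=
  (Finset.range w.length).filter (fun i =>
    (i = 0 ∨ (if i - 1 = 0 then (0 : ℤ) else w[i-2]!) > (if i = 0 then (0 : ℤ) else w[i-1]!)) ∧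
    (if i = 0 then (0 : ℤ) else w[i-1]!) > w[i]!)

def DesA (w : List ℤ) : Finset ℕ :=
  (Finset.range w.length).filter (fun i => 1 ≤ i ∧ w[i-1]! > w[i]!)

def DDesA (w : List ℤ) : Finset ℕ :=
  (Finset.range w.length).filter (fun i => 1 ≤ i ∧
    (i = 1 ∨ w[i-2]! > w[i-1]!) ∧ w[i-1]! > w[i]!)

-- inversions, negatives, negative sum pairs (0-based index sets)
def InvF (w : List ℤ) : Finset (ℕ × ℕ) :=
  (Finset.range w.length ×ˢ Finset.range w.length).filter
    (fun p => p.1 < p.2 ∧ w[p.2]! < w[p.1]!)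

def NegF (w : List ℤ) : Finset ℕ :=
  (Finset.range w.length).filter (fun i => w[i]! < 0)

def NspF (w : List ℤ) : Finset (ℕ × ℕ) :=
  (Finset.range w.length ×ˢ Finset.range w.length).filter
    (fun p => p.1 < p.2 ∧ w[p.1]! + w[p.2]! < 0)

/-- Left weak order on `S_n` (combinatorial characterization). -/
def leS (u v : List ℤ) : Prop := InvF u ⊆ InvF v

/-- Left weak order on `B_n` (combinatorial characterization). -/
def leB (u v : List ℤ) : Prop := InvF u ⊆ InvF v ∧ NegF u ⊆ NegF v ∧ NspF u ⊆ NspF v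

/-- Coxeter length in type `B`. -/
def lenB (w : List ℤ) : ℕ := (NegF w).card + (InvF w).card + (NspF w).card

/-- Coxeter length in type `A`. -/
def lenS (w : List ℤ) : ℕ := (InvF w).card

def IsPermW (w : List ℤ) : Prop := IsSignedPerm w ∧ ∀ x ∈ w, 0 < x

/-- Rank generating function of the principal lower ideal `Λ_w^B`. -/
def FLamB (w : List ℤ) : Polynomial ℚ :=
  ∑ᶠ u ∈ {u : List ℤ | u.length = w.length ∧ IsSignedPerm u ∧ leB u w},
    (X : Polynomial ℚ) ^ lenB u

/-- Rank generating function of the principal upper ideal `V_w^B`. -/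
def FVB (w : List ℤ) : Polynomial ℚ :=
  ∑ᶠ u ∈ {u : List ℤ | u.length = w.length ∧ IsSignedPerm u ∧ leB w u},
    (X : Polynomial ℚ) ^ lenB u

/-- Rank generating function of the principal lower ideal `Λ_w^S`. -/
def FLamS (w : List ℤ) : Polynomial ℚ :=
  ∑ᶠ u ∈ {u : List ℤ | u.length = w.length ∧ IsPermW u ∧ leS u w},
    (X : Polynomial ℚ) ^ lenS u

/-- Rank generating function of the principal upper ideal `V_w^S`. -/
def FVS (w : List ℤ) : Polynomial ℚ :=
  ∑ᶠ u ∈ {u : List ℤ | u.length = w.length ∧ IsPermW u ∧ leS w u},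
    (X : Polynomial ℚ) ^ lenS u

/-- `[i] = 1 + q + ⋯ + q^{i-1}`. -/
def qint (i : ℕ) : Polynomial ℚ := ∑ j ∈ Finset.range i, (X : Polynomial ℚ) ^ j

/-- `[m]! = [1][2]⋯[m]`. -/
def qfact (m : ℕ) : Polynomial ℚ := ∏ i ∈ Finset.range m, qint (i + 1)

-- separating trees
inductive STree where
  | leaf : STree
  | node : Bool → STree → STree → STree

def numLeaves : STree → ℕ
  | .leaf => 1
  | .node _ l r => numLeaves l + numLeaves r

def Decomp (w : List ℤ) (p : ℕ) : Prop :=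
  (w = oplus (w.take p) (sts (w.drop p)) ∧ IsSepB (w.take p) ∧ IsSepB (sts (w.drop p)) ∧
    AllSameSign (w.drop p)) ∨
  (w = ominus (sts (w.take p)) (w.drop p) ∧ IsSepB (sts (w.take p)) ∧ IsSepB (w.drop p) ∧
    AllSameSign (w.drop p))

/-- `IsSepTree w T`: `T` is the (shape of the) separating tree of the separable signed
permutation `w`, where internal nodes labeled `true` are `⊕`-nodes and those labeled
`false` are `⊖`-nodes, and the separating index is chosen largest possible. -/
inductive IsSepTree : List ℤ → STree → Prop
  | leaf (x : ℤ) : IsSepTree [x] .leaf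
  | nodeA (w : List ℤ) (p : ℕ) (l r : STree)
      (hp1 : 1 ≤ p) (hp2 : p < w.length)
      (hmax : ∀ q, p < q → q < w.length → ¬ Decomp w q)
      (hdec : w = oplus (w.take p) (sts (w.drop p)))
      (h1 : IsSepB (w.take p)) (h2 : IsSepB (sts (w.drop p)))
      (hsgn : AllSameSign (w.drop p))
      (hl : IsSepTree (w.take p) l) (hr : IsSepTree (sts (w.drop p)) r) :
      IsSepTree w (.node (decide (w[p-1]! < w[p]!)) l r)
  | nodeB (w : List ℤ) (p : ℕ) (l r : STree)
      (hp1 : 1 ≤ p) (hp2 : p < w.length)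
      (hmax : ∀ q, p < q → q < w.length → ¬ Decomp w q)
      (hdec : w = ominus (sts (w.take p)) (w.drop p))
      (h1 : IsSepB (sts (w.take p))) (h2 : IsSepB (w.drop p))
      (hsgn : AllSameSign (w.drop p))
      (hl : IsSepTree (sts (w.take p)) l) (hr : IsSepTree (w.drop p) r) :
      IsSepTree w (.node (decide (w[p-1]! < w[p]!)) l r)

/-- Multiset of leaf-counts `N(V)` over internal `⊕`-nodes `V` whose parent is a
`⊖`-node (the root, whose parent label is `none`, is excluded): the set `S⁺(w)`. -/
def plusNodes : STree → Option Bool → Multiset ℕ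
  | .leaf, _ => 0
  | .node b l r, parent =>
      (if b = true ∧ parent = some false then ({numLeaves (.node b l r)} : Multiset ℕ) else 0)
        + plusNodes l (some b) + plusNodes r (some b)

/-- Multiset of leaf-counts `N(V)` over internal `⊖`-nodes `V` whose parent is a
`⊕`-node (root excluded): the set `S⁻(w)`. -/
def minusNodes : STree → Option Bool → Multiset ℕ
  | .leaf, _ => 0
  | .node b l r, parent =>
      (if b = false ∧ parent = some true then ({numLeaves (.node b l r)} : Multiset ℕ) else 0)
        + minusNodes l (some b) + minusNodes r (some b)

/-- `∏_{m ∈ s} [m]!`. -/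
def qfactProd (s : Multiset ℕ) : Polynomial ℚ := (s.map qfact).prod


theorem length_st (a : List ℤ) : (st a).length = a.length := by simp [st]

theorem length_sts (a : List ℤ) : (sts a).length = a.length := by simp [sts]

theorem pos_of_mem_st {a : List ℤ} {x : ℤ} (hx : x ∈ st a) : 0 < x := by
  simp only [st, List.mem_map] at hx
  obtain ⟨y, -, rfl⟩ := hx
  positivity

theorem st_append_of_lt {a b : List ℤ} (h : ∀ x ∈ a, ∀ y ∈ b, x < y) :
    st (a ++ b) = st a ++ (st b).map (fun x => x + (a.length : ℤ)) := by
  simp only [st, List.map_append, List.filter_append, List.length_append, List.map_map]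
  congr 1
  · refine List.map_congr_left fun x hx => ?_
    have : b.filter (fun y => decide (y < x)) = [] := by
      simp only [List.filter_eq_nil_iff, decide_eq_true_eq]
      exact fun y hy => (h x hx y hy).le.not_gt
    simp [this]
  · refine List.map_congr_left fun x hx => ?_
    have : a.filter (fun y => decide (y < x)) = a := by
      simp only [List.filter_eq_self, decide_eq_true_eq]
      exact fun y hy => h y hy x hx
    simp only [this, Function.comp]
    push_cast
    ring

theorem st_append_of_gt {a b : List ℤ} (h : ∀ x ∈ a, ∀ y ∈ b, y < x) :
    st (a ++ b) = (st a).map (fun x => x + (b.length : ℤ)) ++ st b := by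
  simp only [st, List.map_append, List.filter_append, List.length_append, List.map_map]
  congr 1
  · refine List.map_congr_left fun x hx => ?_
    have : b.filter (fun y => decide (y < x)) = b := by
      simp only [List.filter_eq_self, decide_eq_true_eq]
      exact fun y hy => h x hx y hy
    simp only [this, Function.comp]
    push_cast
    ring
  · refine List.map_congr_left fun x hx => ?_
    have : a.filter (fun y => decide (y < x)) = [] := by
      simp only [List.filter_eq_nil_iff, decide_eq_true_eq]
      exact fun y hy => (h y hy x hx).le.not_gt
    simp [this]

theorem sts_eq_st_of_pos {b : List ℤ} (h : ∀ x ∈ b, 0 < x) : sts b = st b := by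
  refine List.map_congr_left fun x hx => ?_
  have : b.filter (fun y => decide (|y| < |x|)) = b.filter (fun y => decide (y < x)) := by
    refine List.filter_congr fun y hy => ?_
    rw [abs_of_pos (h x hx), abs_of_pos (h y hy)]
  rw [this, Int.sign_eq_one_of_pos (h x hx), one_mul]

/-- In a word without repetitions, the letters other than `x` split into those below and those
above `x`. -/
theorem length_filter_lt_add_gt {b : List ℤ} (hb : b.Nodup) {x : ℤ} (hx : x ∈ b) :
    (b.filter (fun y => decide (y < x))).length + (b.filter (fun y => decide (x < y))).length + 1
      = b.length := by
  have hcount : b.countP (fun y => decide (y = x)) = 1 := by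
    have := List.count_eq_one_of_mem hb hx
    rw [List.count] at this
    rw [← this]
    exact List.countP_congr (by simp)
  simp only [← List.countP_eq_length_filter]
  rw [← hcount]
  clear hcount hb hx
  induction b with
  | nil => simp
  | cons c b ih =>
    simp only [List.countP_cons, List.length_cons, decide_eq_true_eq]
    rcases lt_trichotomy c x with h | h | h
    · simp only [h, h.ne, h.le.not_gt, if_true, if_false]; omega
    · subst h; simp only [lt_irrefl, if_true, if_false]; omega
    · simp only [h, h.ne', h.le.not_gt, if_true, if_false]; omega

/-- On negative words, `sts` ranks the letters downwards from `-1`, whereas `st` ranks them upwards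
from `1`; the two therefore differ by the constant `b.length + 1`. -/
theorem sts_map_add_of_neg {b : List ℤ} (hb : b.Nodup) (h : ∀ x ∈ b, x < 0) :
    (sts b).map (fun x => x + (b.length : ℤ) + 1) = st b := by
  simp only [sts, st, List.map_map]
  refine List.map_congr_left fun x hx => ?_
  have : b.filter (fun y => decide (|y| < |x|)) = b.filter (fun y => decide (x < y)) := by
    refine List.filter_congr fun y hy => ?_
    rw [abs_of_neg (h x hx), abs_of_neg (h y hy)]
    simp only [neg_lt_neg_iff]
  have hlen := length_filter_lt_add_gt hb hx
  simp only [Function.comp, this, Int.sign_eq_neg_one_of_neg (h x hx)]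
  omega

theorem IsSignedPerm.nodup {w : List ℤ} (hw : IsSignedPerm w) : (w.map Int.natAbs).Nodup :=
  hw.nodup_iff.2 List.nodup_range'

theorem IsSignedPerm.mem {w : List ℤ} (hw : IsSignedPerm w) {x : ℤ} (hx : x ∈ w) :
    1 ≤ x.natAbs ∧ x.natAbs ≤ w.length := by
  have := hw.mem_iff.1 (List.mem_map_of_mem hx)
  rw [List.mem_range'_1] at this
  omega

/-- The letters of the second summand of a direct sum have absolute value greater than the length
of the first summand. -/
theorem lt_natAbs_of_mem_drop {w : List ℤ} {p : ℕ} (hw : IsSignedPerm w) (hp : p < w.length)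
    (hdec : w = oplus (w.take p) (sts (w.drop p))) {x : ℤ} (hx : x ∈ w.drop p) :
    p < x.natAbs := by
  have hd : w.drop p = (sts (w.drop p)).map
      (fun x => x + x.sign * ((w.take p).length : ℤ)) := by
    rw [oplus] at hdec
    exact List.append_cancel_left ((List.take_append_drop p w).trans hdec)
  rw [hd, sts, List.map_map, List.mem_map] at hx
  obtain ⟨y, hy, rfl⟩ := hx
  have hlen : (w.take p).length = p := by simp [hp.le]
  simp only [Function.comp, hlen]
  have hy0 := (hw.mem (List.mem_of_mem_drop hy)).1
  generalize ((w.drop p).filter (fun z => decide (|z| < |y|))).length = k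
  have hk : (0 : ℤ) < (k : ℤ) + 1 := by positivity
  rw [Int.sign_mul, Int.sign_eq_one_of_pos hk, mul_one, Int.sign_sign]
  rcases lt_or_gt_of_ne (show y ≠ 0 by omega) with h | h
  · rw [Int.sign_eq_neg_one_of_neg h]; omega
  · rw [Int.sign_eq_one_of_pos h]; omega

theorem IsSignedPerm.take {w : List ℤ} {p : ℕ} (hw : IsSignedPerm w) (hp : p < w.length)
    (hdec : w = oplus (w.take p) (sts (w.drop p))) : IsSignedPerm (w.take p) := by
  have hnd := hw.nodup
  rw [← List.take_append_drop p w, List.map_append, List.nodup_append'] at hnd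
  obtain ⟨hta, hdr, hdisj⟩ := hnd
  have hlen : (w.take p).length = p := by simp [hp.le]
  -- By cardinality, the second summand uses all the absolute values `p+1, …, n`.
  have hfill : ((w.drop p).map Int.natAbs).toFinset = Finset.Ioc p w.length := by
    refine Finset.eq_of_subset_of_card_le (fun k hk => ?_) ?_
    · simp only [List.mem_toFinset, List.mem_map] at hk
      obtain ⟨x, hx, rfl⟩ := hk
      exact Finset.mem_Ioc.2
        ⟨lt_natAbs_of_mem_drop hw hp hdec hx, (hw.mem (List.mem_of_mem_drop hx)).2⟩
    · rw [List.toFinset_card_of_nodup hdr]; simp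
  refine (List.subperm_of_subset hta fun k hk => ?_).perm_of_length_le (by simp)
  have hk' : k ∉ (w.drop p).map Int.natAbs := fun h => hdisj hk h
  rw [← List.mem_toFinset, hfill, Finset.mem_Ioc] at hk'
  obtain ⟨x, hx, rfl⟩ := List.mem_map.1 hk
  have := hw.mem (List.mem_of_mem_take hx)
  rw [List.mem_range'_1, hlen]
  omega

theorem natAbs_le_of_mem_zero_cons_take {w : List ℤ} {p : ℕ} (hw : IsSignedPerm w)
    (hp : p < w.length) (hdec : w = oplus (w.take p) (sts (w.drop p))) {x : ℤ}
    (hx : x ∈ (0 : ℤ) :: w.take p) : x.natAbs ≤ p := by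
  rcases List.mem_cons.1 hx with rfl | hx
  · simp
  · have := ((hw.take hp hdec).mem hx).2
    simp only [List.length_take] at this
    omega

theorem getElem_last_mem_drop {w : List ℤ} {p : ℕ} (hp : p < w.length) :
    w[w.length - 1]! ∈ w.drop p := by
  rw [getElem!_pos w _ (by omega), List.mem_drop_iff_getElem]
  exact ⟨w.length - 1 - p, by omega, by congr 1; omega⟩

theorem zero_cons_eq_append (w : List ℤ) (p : ℕ) :
    (0 : ℤ) :: w = ((0 : ℤ) :: w.take p) ++ w.drop p := by
  rw [List.cons_append, List.take_append_drop]

theorem PsiRel.eq_st {w v : List ℤ} (hpsi : PsiRel w v) (hw : IsSignedPerm w) :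
    v = st ((0 : ℤ) :: w) := by
  induction hpsi with
  | base => simp [st]
  | pos w u p hp hdec hsign hlast _ ih =>
    have hpos : ∀ x ∈ w.drop p, 0 < x := hsign.resolve_right fun h =>
      (h _ (getElem_last_mem_drop hp)).not_gt hlast
    rw [ih (hw.take hp hdec), zero_cons_eq_append w p, st_append_of_lt, oplus,
      sts_eq_st_of_pos hpos, length_st]
    · congr 1
      refine List.map_congr_left fun x hx => ?_
      rw [Int.sign_eq_one_of_pos (pos_of_mem_st hx), one_mul]
    · intro x hx y hy
      have h1 := natAbs_le_of_mem_zero_cons_take hw hp hdec hx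
      have h2 := lt_natAbs_of_mem_drop hw hp hdec hy
      have h3 := hpos y hy
      omega
  | neg w u p hp hdec hsign hlast _ ih =>
    have hneg : ∀ x ∈ w.drop p, x < 0 := hsign.resolve_left fun h =>
      (h _ (getElem_last_mem_drop hp)).not_gt hlast
    have hnd : (w.drop p).Nodup := (hw.nodup.of_map _).sublist (List.drop_sublist p w)
    rw [ih (hw.take hp hdec), zero_cons_eq_append w p, st_append_of_gt, ominus,
      ← List.length_drop, sts_map_add_of_neg hnd hneg, length_st]
    · congr 1
      refine List.map_congr_left fun x hx => ?_
      rw [Int.sign_eq_one_of_pos (pos_of_mem_st hx), one_mul]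
    · intro x hx y hy
      have h1 := natAbs_le_of_mem_zero_cons_take hw hp hdec hx
      have h2 := lt_natAbs_of_mem_drop hw hp hdec hy
      have h3 := hneg y hy
      omega

/-- For every `w ∈ K(B_n)`, `ψ_n(w) = st(0 · w)`. -/
theorem psi_eq_st_zero_cons (n : ℕ) (w v : List ℤ)
    (hw : w.length = n) (hsep : IsSepB w) (hpsi : PsiRel w v) :
    v = st ((0 : ℤ) :: w) :=
  hpsi.eq_st hsep.1

end

end SepPaperFormal
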